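/- Under the stated hypotheses, if ‖V‖ < (√3/2)·d (equivalently, δ_V < d/2), then the spectrum of B in the open d/2-neighborhood O_{d/2}(σ) of σ is separated from the remainder of the spectrum of B; more precisely, spec(B) ∩ O_{d/2}(σ) = spec(B) ∩ U_{δ_V}(σ) and this set is nonempty and closed, where U_{δ_V}(σ) is the closed δ_V-neighborhood of σ. -/

import Mathlib

/-- `E` is the projection-valued spectral measure of the bounded self-adjoint operator `T`
on the complex Hilbert space `H`: each `E Δ` (for Borel `Δ ⊆ ℝ`) is an orthogonal
projection, `E` is multiplicative and countably additive (in the strong sense), `E ℝ = 1`,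
each `E Δ` commutes with `T`, and on the range of `E Δ` the operator `T` has its
approximate point spectrum inside the closure of `Δ` (which uniquely characterizes the
spectral measure of `T`). -/
structure IsSpectralMeasure {H : Type*} [NormedAddCommGroup H] [InnerProductSpace ℂ H]
    [CompleteSpace H] (T : H →L[ℂ] H) (E : Set ℝ → H →L[ℂ] H) : Prop where
  isSelfAdjoint : ∀ Δ : Set ℝ, MeasurableSet Δ → IsSelfAdjoint (E Δ)
  map_inter : ∀ Δ₁ Δ₂ : Set ℝ, MeasurableSet Δ₁ → MeasurableSet Δ₂ →
    E Δ₁ * E Δ₂ = E (Δ₁ ∩ Δ₂)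
  map_univ : E Set.univ = 1
  countably_additive : ∀ Δ : ℕ → Set ℝ, (∀ n, MeasurableSet (Δ n)) →
    Pairwise (Function.onFun Disjoint Δ) →
    ∀ x : H, HasSum (fun n => E (Δ n) x) (E (⋃ n, Δ n) x)
  commutes : ∀ Δ : Set ℝ, MeasurableSet Δ → Commute T (E Δ)
  spectrum_loc : ∀ Δ : Set ℝ, MeasurableSet Δ → ∀ x : H, E Δ x = x →
    ∀ μ : ℝ, Metric.infDist μ Δ * ‖x‖ ≤ ‖T x - (μ : ℂ) • x‖

/-!
Fix `δ ≥ 0` with `δ (δ + d) = ‖V‖ ^ 2`, that is `δ = ‖V‖ tan (arctan (2 ‖V‖ / d) / 2)`. Let `(a, b)`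
be a gap of the spectrum of `A`. On the range of `E_A [b, ∞)` the form of `A` is at least `b`, and
since `σ` and `Σ` are `d` apart it is even at least `b + d` on one of the two spectral components;
as `V` only couples these components, the arithmetic-geometric mean inequality bounds the form of
`A + V` there below by `b - δ`. Symmetrically it is at most `a + δ` on the range of
`E_A (-∞, a]`, so `(a + δ, b - δ)` is a gap of the spectrum of `A + V`.

Hence `spec (A + t V)` stays in `U_δ(σ) ∪ U_δ(Σ)` for `|t| ≤ 1`, and `δ < d / 2` makes this union
disjoint. The spectral projections of `A + t V` for `U_δ(σ)` then depend continuously on `t`; their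
norm takes values in `{0, 1}`, hence it cannot drop to `0` on the way from `A` to `A + V`.
-/

open scoped InnerProductSpace

section BoundedOperators

variable {𝕜 H : Type*} [RCLike 𝕜] [NormedAddCommGroup H] [InnerProductSpace 𝕜 H]

lemma sub_mul_norm_add_sq_le_reApplyInnerSelf_add {S W : H →L[𝕜] H} {p q : H} {m d δ : ℝ}
    (hd : 0 ≤ d) (hδ : 0 ≤ δ) (hW : ‖W‖ ^ 2 ≤ δ * (δ + d)) (hpq : ⟪p, q⟫_𝕜 = 0)
    (hp : m * ‖p‖ ^ 2 ≤ S.reApplyInnerSelf p) (hq : (m + d) * ‖q‖ ^ 2 ≤ S.reApplyInnerSelf q)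
    (hSp : ⟪S p, q⟫_𝕜 = 0) (hSq : ⟪S q, p⟫_𝕜 = 0)
    (hWp : ⟪W p, p⟫_𝕜 = 0) (hWq : ⟪W q, q⟫_𝕜 = 0) :
    (m - δ) * ‖p + q‖ ^ 2 ≤ (S + W).reApplyInnerSelf (p + q) := by
  have cross (x y : H) : -(‖W‖ * ‖x‖ * ‖y‖) ≤ RCLike.re ⟪W x, y⟫_𝕜 :=
    neg_le_of_abs_le <| (RCLike.abs_re_le_norm _).trans <| (norm_inner_le_norm _ _).trans <| by
      gcongr
      exact W.le_opNorm x
  have amgm : 2 * (‖W‖ * ‖p‖ * ‖q‖) ≤ δ * ‖p‖ ^ 2 + (δ + d) * ‖q‖ ^ 2 := by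
    refine two_mul_le_add_of_sq_le_mul (by positivity) (by positivity) ?_
    calc (‖W‖ * ‖p‖ * ‖q‖) ^ 2 = ‖W‖ ^ 2 * (‖p‖ ^ 2 * ‖q‖ ^ 2) := by ring
      _ ≤ δ * (δ + d) * (‖p‖ ^ 2 * ‖q‖ ^ 2) := by gcongr
      _ = δ * ‖p‖ ^ 2 * ((δ + d) * ‖q‖ ^ 2) := by ring
  have pythagoras : ‖p + q‖ ^ 2 = ‖p‖ ^ 2 + ‖q‖ ^ 2 := by
    simp [norm_add_sq (𝕜 := 𝕜), hpq]
  simp only [ContinuousLinearMap.reApplyInnerSelf_apply, add_apply, map_add, inner_add_left,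
    inner_add_right, hSp, hSq, hWp, hWq, map_zero] at hp hq ⊢
  rw [pythagoras]
  linarith [cross p q, cross q p]

lemma re_inner_map_add_sub_of_isSymmetric {M : H →L[𝕜] H} (hM : M.IsSymmetric) (y z : H) :
    RCLike.re ⟪M (y + z), y - z⟫_𝕜 = M.reApplyInnerSelf y - M.reApplyInnerSelf z := by
  have cross : RCLike.re ⟪M y, z⟫_𝕜 = RCLike.re ⟪M z, y⟫_𝕜 :=
    (congrArg RCLike.re (hM y z)).trans (inner_re_symm ..)
  simp only [ContinuousLinearMap.reApplyInnerSelf_apply, map_add, inner_add_left,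
    inner_sub_right, map_sub, cross]
  ring

lemma algebraMap_real_apply [Algebra ℝ (H →L[𝕜] H)] [IsScalarTower ℝ 𝕜 (H →L[𝕜] H)] (μ : ℝ)
    (x : H) : algebraMap ℝ (H →L[𝕜] H) μ x = (μ : 𝕜) • x := by
  rw [Algebra.algebraMap_eq_smul_one, ← algebraMap_smul 𝕜 μ (1 : H →L[𝕜] H)]
  rfl

variable [CompleteSpace H]

lemma inner_map_self_eq_zero_of_mul_mul_eq_zero {P W : H →L[𝕜] H} (hP : IsSelfAdjoint P)
    (hPW : P * W * P = 0) {x : H} (hx : P x = x) : ⟪W x, x⟫_𝕜 = 0 :=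
  calc ⟪W x, x⟫_𝕜 = ⟪W (P x), P x⟫_𝕜 := by rw [hx]
    _ = ⟪(P * W * P) x, x⟫_𝕜 := (hP.isSymmetric (W (P x)) x).symm
    _ = 0 := by simp [hPW]

lemma inner_apply_sub_apply_eq_zero {P : H →L[𝕜] H} (hP : IsStarProjection P) (x : H) :
    ⟪P x, x - P x⟫_𝕜 = 0 :=
  calc ⟪P x, x - P x⟫_𝕜 = ⟪x, (P * (1 - P)) x⟫_𝕜 := hP.isSelfAdjoint.isSymmetric x (x - P x)
    _ = 0 := by simp [hP.mul_one_sub_self]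

lemma norm_sq_eq_add_norm_sq_sub {P : H →L[𝕜] H} (hP : IsStarProjection P) (x : H) :
    ‖x‖ ^ 2 = ‖P x‖ ^ 2 + ‖x - P x‖ ^ 2 := by
  have h := norm_add_sq (𝕜 := 𝕜) (P x) (x - P x)
  rwa [add_sub_cancel, inner_apply_sub_apply_eq_zero hP, map_zero, mul_zero, add_zero] at h

lemma isUnit_of_forall_mul_norm_le {S : H →L[𝕜] H} (hS : IsSelfAdjoint S) {c : ℝ} (hc : 0 < c)
    (h : ∀ x, c * ‖x‖ ≤ ‖S x‖) : IsUnit S := by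
  suffices IsUnit (S * S) from ((Commute.refl S).isUnit_mul_iff.1 this).1
  refine ContinuousLinearMap.isUnit_of_forall_le_norm_inner_map _
    (c := ⟨c ^ 2, by positivity⟩) (by positivity : 0 < c ^ 2) fun x => ?_
  calc ‖x‖ ^ 2 * c ^ 2 = (c * ‖x‖) ^ 2 := by ring
    _ ≤ ‖S x‖ ^ 2 := by gcongr; exact h x
    _ = ‖⟪S x, S x⟫_𝕜‖ := by simp [inner_self_eq_norm_sq_to_K]
    _ = ‖⟪(S * S) x, x⟫_𝕜‖ := congrArg norm (hS.isSymmetric (S x) x).symm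

variable [Algebra ℝ (H →L[𝕜] H)] [IsScalarTower ℝ 𝕜 (H →L[𝕜] H)]

lemma notMem_spectrum_iff_exists_forall_mul_norm_le {T : H →L[𝕜] H} (hT : IsSelfAdjoint T)
    {μ : ℝ} : μ ∉ spectrum ℝ T ↔ ∃ c > 0, ∀ x, c * ‖x‖ ≤ ‖T x - (μ : 𝕜) • x‖ := by
  have hμ : IsSelfAdjoint (T - algebraMap ℝ (H →L[𝕜] H) μ) := by
    refine hT.sub (LinearMap.IsSymmetric.isSelfAdjoint fun x y => ?_)
    simp [algebraMap_real_apply, inner_smul_left, inner_smul_right]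
  have happly (x : H) : ‖(T - algebraMap ℝ (H →L[𝕜] H) μ) x‖ = ‖T x - (μ : 𝕜) • x‖ := by
    rw [sub_apply, algebraMap_real_apply]
  rw [spectrum.notMem_iff, IsUnit.sub_iff]
  simp only [← happly]
  refine ⟨fun h => ?_, fun ⟨c, hc, h⟩ => isUnit_of_forall_mul_norm_le hμ hc h⟩
  obtain ⟨c, hc, hle⟩ := antilipschitzWith_iff_exists_mul_le_norm.1
    (ContinuousLinearMap.antilipschitz_of_isEmbedding _
      (ContinuousLinearMap.isHomeomorph_of_isUnit h).isEmbedding)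
  exact ⟨c, hc, hle⟩

lemma notMem_spectrum_mul_of_forall_apply_eq {P T : H →L[𝕜] H} (hP : IsStarProjection P)
    (hT : IsSelfAdjoint T) (hPT : Commute P T) {μ c : ℝ} (hμ : μ ≠ 0) (hc : 0 < c)
    (h : ∀ x, P x = x → c * ‖x‖ ≤ ‖T x - (μ : 𝕜) • x‖) : μ ∉ spectrum ℝ (P * T) := by
  rw [notMem_spectrum_iff_exists_forall_mul_norm_le
    ((hP.isSelfAdjoint.commute_iff hT).1 hPT)]
  refine ⟨min c |μ|, lt_min hc (abs_pos.2 hμ), fun x => ?_⟩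
  have hPP (y : H) : P (P y) = P y := congr($(hP.isIdempotentElem.eq) y)
  have hTP : T (P x) = P (T x) := congr($(hPT.eq.symm) x)
  set y := (P * T) x - (μ : 𝕜) • x with hy
  have hPy : P y = T (P x) - (μ : 𝕜) • P x := by simp [hy, hPP, hTP]
  have hy_sub : y - P y = -((μ : 𝕜) • (x - P x)) := by
    rw [hPy, hTP, hy, mul_apply_eq_comp]
    module
  have hrange : min c |μ| * ‖P x‖ ≤ ‖P y‖ := by
    rw [hPy]
    exact le_trans (by gcongr; exact min_le_left _ _) (h (P x) (hPP x))
  have hker : min c |μ| * ‖x - P x‖ ≤ ‖y - P y‖ := by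
    rw [hy_sub, norm_neg, norm_smul, RCLike.norm_ofReal]
    gcongr
    exact min_le_right _ _
  refine (sq_le_sq₀ (by positivity) (norm_nonneg _)).1 ?_
  calc (min c |μ| * ‖x‖) ^ 2 = (min c |μ| * ‖P x‖) ^ 2 + (min c |μ| * ‖x - P x‖) ^ 2 := by
        rw [mul_pow, norm_sq_eq_add_norm_sq_sub hP x]; ring
    _ ≤ ‖P y‖ ^ 2 + ‖y - P y‖ ^ 2 := by gcongr
    _ = ‖y‖ ^ 2 := (norm_sq_eq_add_norm_sq_sub hP y).symm

theorem disjoint_Ioo_spectrum_of_reApplyInnerSelf_bounds {M P : H →L[𝕜] H}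
    (hM : IsSelfAdjoint M) (hP : IsStarProjection P) {a b : ℝ}
    (hb : ∀ x, P x = x → b * ‖x‖ ^ 2 ≤ M.reApplyInnerSelf x)
    (ha : ∀ x, P x = 0 → M.reApplyInnerSelf x ≤ a * ‖x‖ ^ 2) :
    Disjoint (Set.Ioo a b) (spectrum ℝ M) := by
  refine Set.disjoint_left.2 fun l hl => ?_
  rw [notMem_spectrum_iff_exists_forall_mul_norm_le hM]
  obtain ⟨c, hc, hcb, hca⟩ : ∃ c > 0, c ≤ b - l ∧ c ≤ l - a :=
    ⟨min (b - l) (l - a), lt_min (sub_pos.2 hl.2) (sub_pos.2 hl.1), min_le_left _ _,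
      min_le_right _ _⟩
  refine ⟨c, hc, fun x => ?_⟩
  -- Pair `(M - l) x` with the reflection `P x - (x - P x)` of `x`, which has the norm of `x`.
  have hPP : P (P x) = P x := congr($(hP.isIdempotentElem.eq) x)
  have hb' := hb (P x) hPP
  have ha' := ha (x - P x) (by rw [map_sub, hPP, sub_self])
  have horth := inner_apply_sub_apply_eq_zero hP x
  have hpyth := norm_sq_eq_add_norm_sq_sub hP x
  set y := P x
  set z := x - P x
  have hxyz : x = y + z := (add_sub_cancel ..).symm
  have hnorm : ‖y - z‖ = ‖x‖ := by
    rw [← sq_eq_sq₀ (norm_nonneg _) (norm_nonneg _), hpyth, norm_sub_sq (𝕜 := 𝕜), horth]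
    simp
  have hid : RCLike.re ⟪x, y - z⟫_𝕜 = ‖y‖ ^ 2 - ‖z‖ ^ 2 := by
    simpa [ContinuousLinearMap.reApplyInnerSelf_apply, ← hxyz] using
      re_inner_map_add_sub_of_isSymmetric (M := .id 𝕜 H) (fun _ _ => rfl) y z
  have hform : RCLike.re ⟪M x - (l : 𝕜) • x, y - z⟫_𝕜 =
      (M.reApplyInnerSelf y - M.reApplyInnerSelf z) - l * (‖y‖ ^ 2 - ‖z‖ ^ 2) := by
    rw [inner_sub_left, inner_smul_left, map_sub, RCLike.conj_ofReal, RCLike.re_ofReal_mul, hid,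
      ← re_inner_map_add_sub_of_isSymmetric hM.isSymmetric, ← hxyz]
  have hle : c * ‖x‖ * ‖x‖ ≤ ‖M x - (l : 𝕜) • x‖ * ‖x‖ :=
    calc c * ‖x‖ * ‖x‖ = c * ‖y‖ ^ 2 + c * ‖z‖ ^ 2 := by rw [mul_assoc, ← sq, hpyth, mul_add]
      _ ≤ (b - l) * ‖y‖ ^ 2 + (l - a) * ‖z‖ ^ 2 := by gcongr
      _ ≤ RCLike.re ⟪M x - (l : 𝕜) • x, y - z⟫_𝕜 := by linarith
      _ ≤ ‖M x - (l : 𝕜) • x‖ * ‖x‖ := hnorm ▸ re_inner_le_norm _ _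
  rcases (norm_nonneg x).eq_or_lt with hx | hx
  · simp [← hx]
  · exact le_of_mul_le_mul_right hle hx

end BoundedOperators

section RealLine

lemma subset_Ici_add_or_subset_Ici_add {s t : Set ℝ} {m d : ℝ} (hs : s ⊆ Set.Ici m)
    (ht : t ⊆ Set.Ici m) (hdist : ∀ p ∈ s, ∀ q ∈ t, d ≤ dist p q) :
    s ⊆ Set.Ici (m + d) ∨ t ⊆ Set.Ici (m + d) := by
  by_contra! h
  obtain ⟨⟨p, hp, hpd⟩, ⟨q, hq, hqd⟩⟩ := Set.not_subset.1 h.1, Set.not_subset.1 h.2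
  have hpm : m ≤ p := hs hp
  have hqm : m ≤ q := ht hq
  rw [Set.mem_Ici, not_le] at hpd hqd
  have hpq : |p - q| < d := abs_sub_lt_iff.2 ⟨by linarith, by linarith⟩
  exact (hdist p hp q hq).not_gt hpq

end RealLine

namespace IsSpectralMeasure

open scoped Pointwise

variable {H : Type*} [NormedAddCommGroup H] [InnerProductSpace ℂ H] [CompleteSpace H]
  {T W : H →L[ℂ] H} {E : Set ℝ → H →L[ℂ] H} {Δ Δ₁ Δ₂ σ τ : Set ℝ}

lemma isStarProjection (hE : IsSpectralMeasure T E) (hΔ : MeasurableSet Δ) :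
    IsStarProjection (E Δ) where
  isIdempotentElem := (hE.map_inter Δ Δ hΔ hΔ).trans (by rw [Set.inter_self])
  isSelfAdjoint := hE.isSelfAdjoint Δ hΔ

lemma neg (hE : IsSpectralMeasure T E) : IsSpectralMeasure (-T) fun Δ => E (-Δ) where
  isSelfAdjoint Δ hΔ := hE.isSelfAdjoint _ hΔ.neg
  map_inter Δ₁ Δ₂ h₁ h₂ := by rw [hE.map_inter _ _ h₁.neg h₂.neg, Set.inter_neg]
  map_univ := by rw [Set.neg_univ, hE.map_univ]
  countably_additive Δ hΔ hdisj x := by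
    rw [Set.iUnion_neg]
    exact hE.countably_additive (fun n => -Δ n) (fun n => (hΔ n).neg)
      (fun i j hij => (hdisj hij).preimage _) x
  commutes Δ hΔ := (hE.commutes _ hΔ.neg).neg_left
  spectrum_loc Δ hΔ x hx μ := by
    have hdist : Metric.infDist (-μ) (-Δ) = Metric.infDist μ Δ := by
      rw [← Set.image_neg_eq_neg]
      exact Metric.infDist_image isometry_neg
    have hnorm : ‖T x - ((-μ : ℝ) : ℂ) • x‖ = ‖(-T) x - (μ : ℂ) • x‖ := by
      rw [← norm_neg, Complex.ofReal_neg, neg_apply]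
      congr 1
      module
    rw [← hdist, ← hnorm]
    exact hE.spectrum_loc _ hΔ.neg x hx (-μ)

lemma map_empty (hE : IsSpectralMeasure T E) : E ∅ = 0 := by
  ext x
  have h := hE.countably_additive (fun _ => ∅) (fun _ => MeasurableSet.empty)
    (fun _ _ _ => disjoint_bot_left) x
  simpa using tendsto_nhds_unique tendsto_const_nhds h.summable.tendsto_atTop_zero

open Classical in
/-- The `H`-valued measure `Δ ↦ E Δ x`; following the convention of `MeasureTheory.VectorMeasure`
it is set to `0` on non-measurable sets, where `E` is unconstrained. -/
noncomputable def vectorMeasure (hE : IsSpectralMeasure T E) (x : H) :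
    MeasureTheory.VectorMeasure ℝ H where
  measureOf' Δ := if MeasurableSet Δ then E Δ x else 0
  empty' := by simp [hE.map_empty]
  not_measurable' _ hΔ := if_neg hΔ
  m_iUnion' Δ hΔ hdisj := by
    simpa only [hΔ, MeasurableSet.iUnion hΔ, if_true] using hE.countably_additive Δ hΔ hdisj x

lemma vectorMeasure_apply (hE : IsSpectralMeasure T E) (hΔ : MeasurableSet Δ) (x : H) :
    hE.vectorMeasure x Δ = E Δ x :=
  if_pos hΔ

lemma map_union (hE : IsSpectralMeasure T E) (h₁ : MeasurableSet Δ₁) (h₂ : MeasurableSet Δ₂)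
    (hdisj : Disjoint Δ₁ Δ₂) : E (Δ₁ ∪ Δ₂) = E Δ₁ + E Δ₂ := by
  ext x
  simpa only [hE.vectorMeasure_apply, h₁, h₂, h₁.union h₂, add_apply] using
    (hE.vectorMeasure x).of_union hdisj h₁ h₂

lemma map_iUnion_eq_zero (hE : IsSpectralMeasure T E) {Δ : ℕ → Set ℝ} (hmono : Monotone Δ)
    (hΔ : ∀ n, MeasurableSet (Δ n)) (hzero : ∀ n, E (Δ n) = 0) : E (⋃ n, Δ n) = 0 := by
  ext x
  have h := (hE.vectorMeasure x).tendsto_vectorMeasure_iUnion_atTop_nat hmono hΔ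
  simp only [hE.vectorMeasure_apply, hΔ, MeasurableSet.iUnion hΔ, hzero, zero_apply] at h
  exact tendsto_nhds_unique h tendsto_const_nhds

lemma mul_eq_zero_of_disjoint (hE : IsSpectralMeasure T E) (h₁ : MeasurableSet Δ₁)
    (h₂ : MeasurableSet Δ₂) (hdisj : Disjoint Δ₁ Δ₂) : E Δ₁ * E Δ₂ = 0 := by
  rw [hE.map_inter _ _ h₁ h₂, hdisj.inter_eq, hE.map_empty]

lemma inner_eq_zero (hE : IsSpectralMeasure T E) (h₁ : MeasurableSet Δ₁)
    (h₂ : MeasurableSet Δ₂) (hdisj : Disjoint Δ₁ Δ₂) (x y : H) : ⟪E Δ₁ x, E Δ₂ y⟫_ℂ = 0 :=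
  calc ⟪E Δ₁ x, E Δ₂ y⟫_ℂ = ⟪x, (E Δ₁ * E Δ₂) y⟫_ℂ :=
        (hE.isSelfAdjoint _ h₁).isSymmetric x (E Δ₂ y)
    _ = 0 := by simp [hE.mul_eq_zero_of_disjoint h₁ h₂ hdisj]

lemma inner_map_eq_zero (hE : IsSpectralMeasure T E) (h₁ : MeasurableSet Δ₁)
    (h₂ : MeasurableSet Δ₂) (hdisj : Disjoint Δ₁ Δ₂) (x y : H) :
    ⟪T (E Δ₁ x), E Δ₂ y⟫_ℂ = 0 := by
  rw [show T (E Δ₁ x) = E Δ₁ (T x) from congr($((hE.commutes _ h₁).eq) x)]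
  exact hE.inner_eq_zero h₁ h₂ hdisj (T x) y

lemma commute_sub_algebraMap (hE : IsSpectralMeasure T E) (hΔ : MeasurableSet Δ) (m : ℝ) :
    Commute (E Δ) (T - algebraMap ℝ (H →L[ℂ] H) m) :=
  (hE.commutes Δ hΔ).symm.sub_right (Algebra.commutes m _).symm

lemma isSelfAdjoint_mul_sub (hE : IsSpectralMeasure T E) (hT : IsSelfAdjoint T)
    (hΔ : MeasurableSet Δ) (m : ℝ) :
    IsSelfAdjoint (E Δ * (T - algebraMap ℝ (H →L[ℂ] H) m)) :=
  ((hE.isSelfAdjoint Δ hΔ).commute_iff (hT.sub (.algebraMap _ (.all m)))).1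
    (hE.commute_sub_algebraMap hΔ m)

lemma notMem_spectrum_mul_sub (hE : IsSpectralMeasure T E) (hT : IsSelfAdjoint T)
    (hΔ : MeasurableSet Δ) {m μ : ℝ} (hμ : μ ≠ 0)
    (hmem : m + μ ∉ closure Δ ∩ spectrum ℝ T) :
    μ ∉ spectrum ℝ (E Δ * (T - algebraMap ℝ (H →L[ℂ] H) m)) := by
  obtain ⟨c, hc, hle⟩ :
      ∃ c > 0, ∀ x, E Δ x = x → c * ‖x‖ ≤ ‖T x - ((m + μ : ℝ) : ℂ) • x‖ := by
    by_cases hcl : m + μ ∈ closure Δ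
    · obtain ⟨c, hc, hle⟩ :=
        (notMem_spectrum_iff_exists_forall_mul_norm_le hT).1 fun h => hmem ⟨hcl, h⟩
      exact ⟨c, hc, fun x _ => hle x⟩
    · rcases Δ.eq_empty_or_nonempty with rfl | hne
      · refine ⟨1, one_pos, fun x hx => ?_⟩
        obtain rfl : x = 0 := by simpa [hE.map_empty] using hx.symm
        simp
      · exact ⟨Metric.infDist (m + μ) Δ, (Metric.infDist_pos_iff_notMem_closure hne).1 hcl,
          fun x hx => hE.spectrum_loc Δ hΔ x hx (m + μ)⟩
  refine notMem_spectrum_mul_of_forall_apply_eq (hE.isStarProjection hΔ)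
    (hT.sub (.algebraMap _ (.all m))) (hE.commute_sub_algebraMap hΔ m) hμ hc
    fun x hx => ?_
  convert hle x hx using 2
  rw [sub_apply, algebraMap_real_apply, Complex.ofReal_add, add_smul, sub_sub]
  rfl

lemma map_eq_zero_of_disjoint_closure (hE : IsSpectralMeasure T E) (hT : IsSelfAdjoint T)
    (hΔ : MeasurableSet Δ) (hdisj : Disjoint (closure Δ) (spectrum ℝ T)) : E Δ = 0 := by
  have hzero (m : ℝ) : E Δ * (T - algebraMap ℝ (H →L[ℂ] H) m) = 0 := by
    refine CFC.eq_zero_of_spectrum_subset_zero (R := ℝ) _ (fun μ hμ => ?_)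
      (hE.isSelfAdjoint_mul_sub hT hΔ m)
    by_contra hne
    exact hE.notMem_spectrum_mul_sub hT hΔ hne (by simp [hdisj.inter_eq]) hμ
  -- `T` would act on the range of `E Δ` both as `0` and as the identity.
  simpa [mul_sub] using congr($(hzero 0) - $(hzero 1))

lemma map_eq_one_of_spectrum_subset (hE : IsSpectralMeasure T E) (hT : IsSelfAdjoint T)
    (hΔ : MeasurableSet Δ) (hsub : spectrum ℝ T ⊆ Δ) : E Δ = 1 := by
  have hclosed : IsClosed (spectrum ℝ T) := spectrum.isClosed T
  have hmeas := hclosed.measurableSet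
  obtain ⟨F, hF, hFsub, hFU, hFmono⟩ := hclosed.isOpen_compl.exists_iUnion_isClosed
  have hcompl : E (spectrum ℝ T)ᶜ = 0 := by
    rw [← hFU]
    refine hE.map_iUnion_eq_zero hFmono (fun n => (hF n).measurableSet) fun n =>
      hE.map_eq_zero_of_disjoint_closure hT (hF n).measurableSet ?_
    rw [(hF n).closure_eq]
    exact Set.disjoint_left.2 (hFsub n)
  have hspec_one : E (spectrum ℝ T) = 1 := by
    rw [← hE.map_univ, ← Set.union_compl_self (spectrum ℝ T),
      hE.map_union hmeas hmeas.compl disjoint_compl_right, hcompl, add_zero]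
  rw [← mul_one (E Δ), ← hspec_one, hE.map_inter _ _ hΔ hmeas, Set.inter_eq_right.2 hsub]

lemma mul_norm_sq_le_reApplyInnerSelf (hE : IsSpectralMeasure T E) (hT : IsSelfAdjoint T)
    (hΔ : MeasurableSet Δ) {m : ℝ} (hm : Δ ⊆ Set.Ici m) {x : H} (hx : E Δ x = x) :
    m * ‖x‖ ^ 2 ≤ T.reApplyInnerSelf x := by
  have hsa := hE.isSelfAdjoint_mul_sub hT hΔ m
  have hnonneg : 0 ≤ E Δ * (T - algebraMap ℝ (H →L[ℂ] H) m) := by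
    rw [StarOrderedRing.nonneg_iff_spectrum_nonneg (R := ℝ) _ hsa]
    intro μ hμ
    by_contra! hneg
    refine hE.notMem_spectrum_mul_sub hT hΔ hneg.ne (fun h => ?_) hμ
    have : m ≤ m + μ := closure_minimal hm isClosed_Ici h.1
    linarith
  have hform := ((ContinuousLinearMap.nonneg_iff_isPositive _).1 hnonneg).re_inner_nonneg_left x
  have hcompress : ⟪(E Δ * (T - algebraMap ℝ (H →L[ℂ] H) m)) x, x⟫_ℂ =
      ⟪T x - (m : ℂ) • x, x⟫_ℂ :=
    calc ⟪(E Δ * (T - algebraMap ℝ (H →L[ℂ] H) m)) x, x⟫_ℂ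
        = ⟪E Δ (T x - (m : ℂ) • x), x⟫_ℂ := by
          rw [mul_apply_eq_comp, sub_apply, algebraMap_real_apply]; rfl
      _ = ⟪T x - (m : ℂ) • x, E Δ x⟫_ℂ := (hE.isSelfAdjoint Δ hΔ).isSymmetric _ _
      _ = ⟪T x - (m : ℂ) • x, x⟫_ℂ := by rw [hx]
  have hreal : RCLike.re ⟪(m : ℂ) • x, x⟫_ℂ = m * ‖x‖ ^ 2 := by
    rw [inner_smul_left, Complex.conj_ofReal]
    exact (Complex.re_ofReal_mul m _).trans (congrArg (m * ·) (inner_self_eq_norm_sq (𝕜 := ℂ) x))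
  rw [hcompress, inner_sub_left, map_sub, hreal] at hform
  rw [ContinuousLinearMap.reApplyInnerSelf_apply]
  linarith

lemma sub_mul_norm_sq_le_reApplyInnerSelf_add_of_union (hE : IsSpectralMeasure T E)
    (hT : IsSelfAdjoint T) (h₁ : MeasurableSet Δ₁) (h₂ : MeasurableSet Δ₂)
    (hdisj : Disjoint Δ₁ Δ₂) {m d δ : ℝ} (hd : 0 ≤ d) (hδ : 0 ≤ δ)
    (hm₁ : Δ₁ ⊆ Set.Ici m) (hm₂ : Δ₂ ⊆ Set.Ici (m + d)) (hW : ‖W‖ ^ 2 ≤ δ * (δ + d))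
    (hW₁ : E Δ₁ * W * E Δ₁ = 0) (hW₂ : E Δ₂ * W * E Δ₂ = 0) {x : H}
    (hx : E (Δ₁ ∪ Δ₂) x = x) :
    (m - δ) * ‖x‖ ^ 2 ≤ (T + W).reApplyInnerSelf x := by
  have hfix₁ : E Δ₁ (E Δ₁ x) = E Δ₁ x :=
    congr($((hE.isStarProjection h₁).isIdempotentElem.eq) x)
  have hfix₂ : E Δ₂ (E Δ₂ x) = E Δ₂ x :=
    congr($((hE.isStarProjection h₂).isIdempotentElem.eq) x)
  have hsum : x = E Δ₁ x + E Δ₂ x := by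
    rw [← add_apply, ← hE.map_union h₁ h₂ hdisj, hx]
  rw [hsum]
  exact sub_mul_norm_add_sq_le_reApplyInnerSelf_add hd hδ hW
    (hE.inner_eq_zero h₁ h₂ hdisj x x)
    (hE.mul_norm_sq_le_reApplyInnerSelf hT h₁ hm₁ hfix₁)
    (hE.mul_norm_sq_le_reApplyInnerSelf hT h₂ hm₂ hfix₂)
    (hE.inner_map_eq_zero h₁ h₂ hdisj x x) (hE.inner_map_eq_zero h₂ h₁ hdisj.symm x x)
    (inner_map_self_eq_zero_of_mul_mul_eq_zero (hE.isSelfAdjoint _ h₁) hW₁ hfix₁)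
    (inner_map_self_eq_zero_of_mul_mul_eq_zero (hE.isSelfAdjoint _ h₂) hW₂ hfix₂)

lemma mul_mul_eq_zero_of_subset (hE : IsSpectralMeasure T E) (h₁ : MeasurableSet Δ₁)
    (h₂ : MeasurableSet Δ₂) (hsub : Δ₁ ⊆ Δ₂) (hW : E Δ₂ * W * E Δ₂ = 0) :
    E Δ₁ * W * E Δ₁ = 0 :=
  calc E Δ₁ * W * E Δ₁ = E Δ₁ * E Δ₂ * W * (E Δ₂ * E Δ₁) := by
        rw [hE.map_inter _ _ h₁ h₂, hE.map_inter _ _ h₂ h₁, Set.inter_eq_left.2 hsub,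
          Set.inter_eq_right.2 hsub]
    _ = E Δ₁ * (E Δ₂ * W * E Δ₂) * E Δ₁ := by simp only [mul_assoc]
    _ = 0 := by rw [hW, mul_zero, zero_mul]

lemma sub_mul_norm_sq_le_reApplyInnerSelf_add_of_offDiagonal (hE : IsSpectralMeasure T E)
    (hT : IsSelfAdjoint T) (hσ : MeasurableSet σ) (hτ : MeasurableSet τ)
    (hone : E (σ ∪ τ) = 1) {d δ : ℝ} (hd : 0 < d) (hdist : ∀ p ∈ σ, ∀ q ∈ τ, d ≤ dist p q)
    (hWσ : E σ * W * E σ = 0) (hWτ : E τ * W * E τ = 0) (hδ : 0 ≤ δ)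
    (hW : ‖W‖ ^ 2 ≤ δ * (δ + d)) {m : ℝ} {x : H} (hx : E (Set.Ici m) x = x) :
    (m - δ) * ‖x‖ ^ 2 ≤ (T + W).reApplyInnerSelf x := by
  have hσm := hσ.inter (measurableSet_Ici (a := m))
  have hτm := hτ.inter (measurableSet_Ici (a := m))
  have hdisj : Disjoint (σ ∩ Set.Ici m) (τ ∩ Set.Ici m) :=
    Set.disjoint_left.2 fun p hp hp' => by simpa using hd.trans_le (hdist p hp.1 p hp'.1)
  have hWσm := hE.mul_mul_eq_zero_of_subset hσm hσ Set.inter_subset_left hWσ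
  have hWτm := hE.mul_mul_eq_zero_of_subset hτm hτ Set.inter_subset_left hWτ
  have hxm : E (σ ∩ Set.Ici m ∪ τ ∩ Set.Ici m) x = x := by
    rw [← Set.union_inter_distrib_right, ← hE.map_inter _ _ (hσ.union hτ) measurableSet_Ici,
      hone, one_mul, hx]
  rcases subset_Ici_add_or_subset_Ici_add Set.inter_subset_right Set.inter_subset_right
    (fun p hp q hq => hdist p hp.1 q hq.1) with hσd | hτd
  · exact hE.sub_mul_norm_sq_le_reApplyInnerSelf_add_of_union hT hτm hσm hdisj.symm hd.le hδ
      Set.inter_subset_right hσd hW hWτm hWσm (Set.union_comm _ _ ▸ hxm)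
  · exact hE.sub_mul_norm_sq_le_reApplyInnerSelf_add_of_union hT hσm hτm hdisj hd.le hδ
      Set.inter_subset_right hτd hW hWσm hWτm hxm

lemma reApplyInnerSelf_add_le_add_mul_norm_sq_of_offDiagonal (hE : IsSpectralMeasure T E)
    (hT : IsSelfAdjoint T) (hσ : MeasurableSet σ) (hτ : MeasurableSet τ)
    (hone : E (σ ∪ τ) = 1) {d δ : ℝ} (hd : 0 < d) (hdist : ∀ p ∈ σ, ∀ q ∈ τ, d ≤ dist p q)
    (hWσ : E σ * W * E σ = 0) (hWτ : E τ * W * E τ = 0) (hδ : 0 ≤ δ)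
    (hW : ‖W‖ ^ 2 ≤ δ * (δ + d)) {m : ℝ} {x : H} (hx : E (Set.Iic m) x = x) :
    (T + W).reApplyInnerSelf x ≤ (m + δ) * ‖x‖ ^ 2 := by
  have h := hE.neg.sub_mul_norm_sq_le_reApplyInnerSelf_add_of_offDiagonal (W := -W) (σ := -σ)
    (τ := -τ) (m := -m) (d := d) (δ := δ) (x := x) hT.neg hσ.neg hτ.neg
    (by rw [Set.union_neg, neg_neg, neg_neg, hone]) hd
    (fun p hp q hq => dist_neg_neg p q ▸ hdist _ hp _ hq) (by simpa using hWσ)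
    (by simpa using hWτ) hδ (by rwa [norm_neg]) (by simpa using hx)
  simp only [← neg_add, ContinuousLinearMap.reApplyInnerSelf_apply, neg_apply, inner_neg_left,
    map_neg] at h ⊢
  linarith

theorem disjoint_Ioo_spectrum_add (hE : IsSpectralMeasure T E) (hT : IsSelfAdjoint T)
    (hW : IsSelfAdjoint W) (hσ : MeasurableSet σ) (hτ : MeasurableSet τ)
    (hspec : spectrum ℝ T ⊆ σ ∪ τ) {d δ : ℝ} (hd : 0 < d)
    (hdist : ∀ p ∈ σ, ∀ q ∈ τ, d ≤ dist p q) (hWσ : E σ * W * E σ = 0)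
    (hWτ : E τ * W * E τ = 0) (hδ : 0 ≤ δ) (hWδ : ‖W‖ ^ 2 ≤ δ * (δ + d)) {a b : ℝ}
    (hab : Disjoint (Set.Ioo a b) (spectrum ℝ T)) :
    Disjoint (Set.Ioo (a + δ) (b - δ)) (spectrum ℝ (T + W)) := by
  have hone := hE.map_eq_one_of_spectrum_subset hT (hσ.union hτ) hspec
  rcases le_or_gt b a with hba | hlt
  · rw [Set.Ioo_eq_empty_of_le (by linarith)]
    exact Set.empty_disjoint _
  have hsum : E (Set.Iic a) + E (Set.Ici b) = 1 := by
    rw [← hE.map_union measurableSet_Iic measurableSet_Ici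
      (Set.Iic_disjoint_Ici.2 hlt.not_ge)]
    refine hE.map_eq_one_of_spectrum_subset hT (measurableSet_Iic.union measurableSet_Ici)
      fun l hl => ?_
    by_contra! h
    simp only [Set.mem_union, Set.mem_Iic, Set.mem_Ici, not_or, not_le] at h
    exact Set.disjoint_left.1 hab h hl
  refine disjoint_Ioo_spectrum_of_reApplyInnerSelf_bounds (hT.add hW)
    (hE.isStarProjection (measurableSet_Ici (a := b))) (fun x hx => ?_) fun x hx => ?_
  · exact hE.sub_mul_norm_sq_le_reApplyInnerSelf_add_of_offDiagonal hT hσ hτ hone hd hdist hWσ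
      hWτ hδ hWδ hx
  · refine hE.reApplyInnerSelf_add_le_add_mul_norm_sq_of_offDiagonal hT hσ hτ hone hd hdist hWσ
      hWτ hδ hWδ ?_
    simpa [hx] using congr($hsum x)

theorem spectrum_add_subset_cthickening (hE : IsSpectralMeasure T E) (hT : IsSelfAdjoint T)
    (hW : IsSelfAdjoint W) (hσ : MeasurableSet σ) (hτ : MeasurableSet τ)
    (hspec : spectrum ℝ T ⊆ σ ∪ τ) {d δ : ℝ} (hd : 0 < d)
    (hdist : ∀ p ∈ σ, ∀ q ∈ τ, d ≤ dist p q) (hWσ : E σ * W * E σ = 0)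
    (hWτ : E τ * W * E τ = 0) (hδ : 0 ≤ δ) (hWδ : ‖W‖ ^ 2 ≤ δ * (δ + d)) :
    spectrum ℝ (T + W) ⊆ Metric.cthickening δ (spectrum ℝ T) := by
  intro l hl
  rw [Metric.cthickening_eq_iInter_thickening hδ]
  refine Set.mem_iInter₂.2 fun r hr => ?_
  by_contra hfar
  have hgap : Disjoint (Set.Ioo (l - r) (l + r)) (spectrum ℝ T) := by
    rw [← Real.ball_eq_Ioo]
    exact Set.disjoint_left.2 fun p hp hpT => hfar <|
      Metric.mem_thickening_iff.2 ⟨p, hpT, dist_comm p l ▸ hp⟩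
  replace hr : δ < r := hr
  exact Set.disjoint_left.1 (hE.disjoint_Ioo_spectrum_add hT hW hσ hτ hspec hd hdist hWσ hWτ hδ
    hWδ hgap) ⟨by linarith, by linarith⟩ hl

theorem spectrum_add_smul_subset_cthickening (hE : IsSpectralMeasure T E) (hT : IsSelfAdjoint T)
    (hW : IsSelfAdjoint W) (hσ : MeasurableSet σ) (hτ : MeasurableSet τ)
    (hspec : spectrum ℝ T ⊆ σ ∪ τ) {d δ : ℝ} (hd : 0 < d)
    (hdist : ∀ p ∈ σ, ∀ q ∈ τ, d ≤ dist p q) (hWσ : E σ * W * E σ = 0)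
    (hWτ : E τ * W * E τ = 0) (hδ : 0 ≤ δ) (hWδ : ‖W‖ ^ 2 ≤ δ * (δ + d)) {t : ℝ}
    (ht : ‖t‖ ≤ 1) : spectrum ℝ (T + t • W) ⊆ Metric.cthickening δ (spectrum ℝ T) := by
  refine hE.spectrum_add_subset_cthickening hT ((IsSelfAdjoint.all t).smul hW) hσ hτ hspec hd
    hdist ?_ ?_ hδ ?_
  · rw [mul_smul_comm, smul_mul_assoc, hWσ, smul_zero]
  · rw [mul_smul_comm, smul_mul_assoc, hWτ, smul_zero]
  · have hle : ‖t • W‖ ≤ ‖W‖ := by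
      rw [norm_smul]
      exact mul_le_of_le_one_left (norm_nonneg W) ht
    exact le_trans (by gcongr) hWδ

end IsSpectralMeasure

section SpectralPath

lemma norm_mem_zero_one_of_isStarProjection {R : Type*} [NonUnitalNormedRing R] [StarRing R]
    [CStarRing R] {p : R} (hp : IsStarProjection p) : ‖p‖ ∈ ({0, 1} : Set ℝ) := by
  have hsq : ‖p‖ = ‖p‖ * ‖p‖ := by
    simpa [hp.isSelfAdjoint.star_eq, hp.isIdempotentElem.eq] using
      CStarRing.norm_self_mul_star (x := p)
  exact (eq_or_ne ‖p‖ 0).imp_right fun h => (mul_eq_left₀ h).1 hsq.symm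

variable {R : Type*} [CStarAlgebra R]

lemma isStarProjection_cfc {a : R} (ha : IsSelfAdjoint a) {f : ℝ → ℝ}
    (hf : ContinuousOn f (spectrum ℝ a)) (hf01 : Set.MapsTo f (spectrum ℝ a) {0, 1}) :
    IsStarProjection (cfc f a) := by
  rw [isStarProjection_iff_spectrum_subset_and_isSelfAdjoint, cfc_map_spectrum f a]
  exact ⟨hf01.image_subset, cfc_predicate f a⟩

theorem spectrum_inter_nonempty_of_isPreconnected {X : Type*} [TopologicalSpace X] {s : Set X}
    (hs : IsPreconnected s) {a : X → R} (ha : ContinuousOn a s)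
    (hsa : ∀ t ∈ s, IsSelfAdjoint (a t)) {F G : Set ℝ} (hF : IsClosed F) (hG : IsClosed G)
    (hFG : Disjoint F G) (hspec : ∀ t ∈ s, spectrum ℝ (a t) ⊆ F ∪ G) {t₀ t₁ : X} (h₀ : t₀ ∈ s)
    (h₁ : t₁ ∈ s) (hne : (spectrum ℝ (a t₀) ∩ F).Nonempty) :
    (spectrum ℝ (a t₁) ∩ F).Nonempty := by
  obtain ⟨f, hfG, hfF, -⟩ := exists_continuous_zero_one_of_isClosed hG hF hFG.symm
  have hf {t : Set ℝ} : ContinuousOn f t := f.continuous.continuousOn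
  have hnorm : Set.MapsTo (fun t => ‖cfc f (a t)‖) s {0, 1} := fun t ht =>
    norm_mem_zero_one_of_isStarProjection <| isStarProjection_cfc (hsa t ht) hf fun x hx =>
      (hspec t ht hx).elim (fun h => .inr (hfF h)) fun h => .inl (hfG h)
  have hcont : ContinuousOn (fun t => ‖cfc f (a t)‖) s :=
    (ha.cfc_of_mem_nhdsSet f (s := Set.univ) Filter.univ_mem hsa hf).norm
  have hconst : ‖cfc f (a t₁)‖ = ‖cfc f (a t₀)‖ :=
    hs.constant_of_mapsTo (Set.toFinite {0, 1}).isDiscrete hcont hnorm h₁ h₀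
  have hzero (t : X) (ht : t ∈ s) : ‖cfc f (a t)‖ = 0 ↔ Set.EqOn f 0 (spectrum ℝ (a t)) := by
    rw [norm_eq_zero, ← cfc_zero ℝ (a t), cfc_eq_cfc_iff_eqOn (hsa t ht) hf]
  by_contra hempty
  have hvanish : Set.EqOn f 0 (spectrum ℝ (a t₁)) := fun x hx =>
    hfG <| (hspec t₁ h₁ hx).resolve_left fun hxF => hempty ⟨x, hx, hxF⟩
  obtain ⟨x, hx, hxF⟩ := hne
  have hfx : f x = 0 := (hzero t₀ h₀).1 (hconst ▸ (hzero t₁ h₁).2 hvanish) hx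
  exact one_ne_zero ((hfF hxF).symm.trans hfx)

end SpectralPath

lemma inter_eq_inter_of_subset_union {α : Type*} {S F G U : Set α} (hS : S ⊆ F ∪ G) (hFU : F ⊆ U)
    (hUG : Disjoint U G) : S ∩ U = S ∩ F :=
  (Set.inter_subset_inter_right S hFU).antisymm' fun _ hx =>
    ⟨hx.1, (hS hx.1).resolve_right (Set.disjoint_left.1 hUG hx.2)⟩

section Distance

variable {α : Type*} [PseudoMetricSpace α] {s t : Set α}

lemma disjoint_thickening_of_add_le_dist {r r' : ℝ} (h : ∀ p ∈ s, ∀ q ∈ t, r + r' ≤ dist p q) :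
    Disjoint (Metric.thickening r s) (Metric.thickening r' t) := by
  refine Set.disjoint_left.2 fun x hxs hxt => ?_
  obtain ⟨p, hp, hxp⟩ := Metric.mem_thickening_iff.1 hxs
  obtain ⟨q, hq, hxq⟩ := Metric.mem_thickening_iff.1 hxt
  linarith [h p hp q hq, dist_triangle_left p q x]

lemma sInf_image2_dist_le_dist {p q : α} (hp : p ∈ s) (hq : q ∈ t) :
    sInf (Set.image2 dist s t) ≤ dist p q :=
  csInf_le ⟨0, Set.forall_mem_image2.2 fun _ _ _ _ => dist_nonneg⟩ (Set.mem_image2_of_mem hp hq)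

lemma nonempty_of_sInf_image2_dist_pos (h : 0 < sInf (Set.image2 dist s t)) : s.Nonempty := by
  by_contra hs
  rw [Set.not_nonempty_iff_eq_empty.1 hs, Set.image2_empty_left, Real.sInf_empty] at h
  exact h.false

end Distance

section HalfAngle

lemma tan_half_arctan_nonneg {x : ℝ} (hx : 0 ≤ x) : 0 ≤ Real.tan (Real.arctan x / 2) := by
  have harctan : 0 ≤ Real.arctan x := Real.arctan_nonneg.2 hx
  exact Real.tan_nonneg_of_nonneg_of_le_pi_div_two (by linarith)
    (by linarith [Real.arctan_lt_pi_div_two x])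

lemma mul_one_sub_tan_half_arctan_sq (x : ℝ) :
    x * (1 - Real.tan (Real.arctan x / 2) ^ 2) = 2 * Real.tan (Real.arctan x / 2) := by
  have hdouble : x = 2 * Real.tan (Real.arctan x / 2) / (1 - Real.tan (Real.arctan x / 2) ^ 2) := by
    rw [← Real.tan_two_mul, mul_div_cancel₀ _ two_ne_zero, Real.tan_arctan]
  have hne : 1 - Real.tan (Real.arctan x / 2) ^ 2 ≠ 0 := fun h => by
    rw [h, div_zero] at hdouble
    simp [hdouble] at h
  exact (eq_div_iff hne).1 hdouble

lemma mul_tan_half_arctan_mul_add (v : ℝ) {d : ℝ} (hd : d ≠ 0) :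
    v * Real.tan (Real.arctan (2 * v / d) / 2) *
      (v * Real.tan (Real.arctan (2 * v / d) / 2) + d) = v ^ 2 := by
  have h := mul_one_sub_tan_half_arctan_sq (2 * v / d)
  rw [div_mul_eq_mul_div, div_eq_iff hd] at h
  linear_combination -(v / 2) * h

lemma lt_half_of_mul_add_eq_sq {v d δ : ℝ} (hv : 0 ≤ v) (hvd : v < √3 / 2 * d)
    (hδ : δ * (δ + d) = v ^ 2) : δ < d / 2 := by
  have hsq : v ^ 2 < 3 / 4 * d ^ 2 := by
    have h := pow_lt_pow_left₀ hvd hv two_ne_zero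
    rw [mul_pow, div_pow, Real.sq_sqrt zero_le_three] at h
    linarith
  have hd : 0 < d := pos_of_mul_pos_right (hv.trans_lt hvd) (by positivity)
  by_contra! h
  have hδ0 : 0 ≤ δ := (half_pos hd).le.trans h
  have hle : 3 / 4 * d ^ 2 ≤ δ * (δ + d) :=
    calc 3 / 4 * d ^ 2 = d / 2 * (d / 2 + d) := by ring
      _ ≤ δ * (δ + d) := by gcongr
  linarith

end HalfAngle

theorem spectrum_separated_half_d_neighborhood_general
    {H : Type*} [NormedAddCommGroup H] [InnerProductSpace ℂ H] [CompleteSpace H]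
    (A V B : H →L[ℂ] H) (hA : IsSelfAdjoint A) (hV : IsSelfAdjoint V) (hB : B = A + V)
    (σ Sig : Set ℝ) (hσc : IsClosed σ) (hSigc : IsClosed Sig)
    (hspec : spectrum ℝ A = σ ∪ Sig)
    (d : ℝ) (hd : d = sInf (Set.image2 dist σ Sig)) (hd0 : 0 < d)
    (EA : Set ℝ → H →L[ℂ] H) (hEA : IsSpectralMeasure A EA)
    (hoff₁ : EA σ * V * EA σ = 0) (hoff₂ : EA Sig * V * EA Sig = 0)
    (δ : ℝ) (hδ : δ = ‖V‖ * Real.tan (Real.arctan (2 * ‖V‖ / d) / 2))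
    (hnorm : ‖V‖ < Real.sqrt 3 / 2 * d) :
    spectrum ℝ B ∩ Metric.thickening (d / 2) σ = spectrum ℝ B ∩ Metric.cthickening δ σ ∧
    (spectrum ℝ B ∩ Metric.thickening (d / 2) σ).Nonempty ∧
    IsClosed (spectrum ℝ B ∩ Metric.thickening (d / 2) σ) := by
  have hdist : ∀ p ∈ σ, ∀ q ∈ Sig, d ≤ dist p q :=
    fun _ hp _ hq => hd.trans_le (sInf_image2_dist_le_dist hp hq)
  have hδ0 : 0 ≤ δ := hδ ▸ mul_nonneg (norm_nonneg V) (tan_half_arctan_nonneg (by positivity))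
  have hδV : δ * (δ + d) = ‖V‖ ^ 2 := hδ ▸ mul_tan_half_arctan_mul_add ‖V‖ hd0.ne'
  have hδd : δ < d / 2 := lt_half_of_mul_add_eq_sq (norm_nonneg V) hnorm hδV
  have hsub (s : Set ℝ) : Metric.cthickening δ s ⊆ Metric.thickening (d / 2) s :=
    Metric.cthickening_subset_thickening' (half_pos hd0) hδd s
  have hdisj : Disjoint (Metric.thickening (d / 2) σ) (Metric.cthickening δ Sig) :=
    (disjoint_thickening_of_add_le_dist (by simpa only [add_halves])).mono_right (hsub Sig)
  have hpath (t : ℝ) (ht : t ∈ Metric.closedBall (0 : ℝ) 1) :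
      spectrum ℝ (A + t • V) ⊆ Metric.cthickening δ σ ∪ Metric.cthickening δ Sig := by
    rw [← Metric.cthickening_union, ← hspec]
    exact hEA.spectrum_add_smul_subset_cthickening hA hV hσc.measurableSet hSigc.measurableSet
      hspec.subset hd0 hdist hoff₁ hoff₂ hδ0 hδV.ge (mem_closedBall_zero_iff.1 ht)
  obtain rfl : B = A + (1 : ℝ) • V := by rw [hB, one_smul]
  have hpersist : (spectrum ℝ (A + (1 : ℝ) • V) ∩ Metric.cthickening δ σ).Nonempty := by
    obtain ⟨p, hp⟩ := nonempty_of_sInf_image2_dist_pos (hd ▸ hd0)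
    exact spectrum_inter_nonempty_of_isPreconnected (convex_closedBall 0 1).isPreconnected
      (by fun_prop) (fun t _ => hA.add ((IsSelfAdjoint.all t).smul hV))
      Metric.isClosed_cthickening Metric.isClosed_cthickening (hdisj.mono_left (hsub σ)) hpath
      (Metric.mem_closedBall_self zero_le_one) (by simp)
      ⟨p, by simp [hspec, hp], Metric.self_subset_cthickening σ hp⟩
  rw [inter_eq_inter_of_subset_union (hpath 1 (by simp)) (hsub σ) hdisj]
  exact ⟨rfl, hpersist, (spectrum.isClosed _).inter Metric.isClosed_cthickening⟩

/-- **Theorem (Theorem 2.1 (ii)).** If moreover `‖V‖ < (√3/2) d` (equivalently `δ_V < d/2`),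
then the spectrum of `B = A + V` in the open `d/2`-neighborhood of `σ` is separated from the
remainder of the spectrum of `B`: it coincides with the part of `spec B` in the closed
`δ_V`-neighborhood of `σ`, and it is a nonempty closed set. -/
theorem spectrum_separated_half_d_neighborhood
    {H : Type*} [NormedAddCommGroup H] [InnerProductSpace ℂ H] [CompleteSpace H]
    [TopologicalSpace.SeparableSpace H]
    (A V B : H →L[ℂ] H) (hA : IsSelfAdjoint A) (hV : IsSelfAdjoint V) (hB : B = A + V)
    (σ Sig : Set ℝ) (hσc : IsClosed σ) (hSigc : IsClosed Sig) (hdisj : Disjoint σ Sig)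
    (hspec : spectrum ℝ A = σ ∪ Sig)
    (d : ℝ) (hd : d = sInf (Set.image2 dist σ Sig)) (hd0 : 0 < d)
    (EA : Set ℝ → H →L[ℂ] H) (hEA : IsSpectralMeasure A EA)
    (hoff₁ : EA σ * V * EA σ = 0) (hoff₂ : EA Sig * V * EA Sig = 0)
    (δ : ℝ) (hδ : δ = ‖V‖ * Real.tan (Real.arctan (2 * ‖V‖ / d) / 2))
    (hnorm : ‖V‖ < Real.sqrt 3 / 2 * d) :
    spectrum ℝ B ∩ Metric.thickening (d / 2) σ = spectrum ℝ B ∩ Metric.cthickening δ σ ∧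
    (spectrum ℝ B ∩ Metric.thickening (d / 2) σ).Nonempty ∧
    IsClosed (spectrum ℝ B ∩ Metric.thickening (d / 2) σ) :=
  spectrum_separated_half_d_neighborhood_general A V B hA hV hB σ Sig hσc hSigc hspec d hd hd0 EA
    hEA hoff₁ hoff₂ δ hδ hnorm
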